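/- arXiv:2405.08589 — 3 statements merged into one kernel-verified Lean document; each statement's English description precedes it below -/
import Mathlib

section
/- Let x̲ ≤ x ≤ x̄ and y̲ ≤ y ≤ ȳ be real numbers. Then max{x̲·y + x·y̲ − x̲·y̲, x̄·y + x·ȳ − x̄·ȳ} ≤ x·y; that is, both McCormick linear underestimators x̲·y + x·y̲ − x̲·y̲ and x̄·y + x·ȳ − x̄·ȳ are lower bounds for the bilinear monomial x·y on the rectangle [x̲, x̄] × [y̲, ȳ]. -/
/-!
The gap between `x * y` and its linearization at a corner `(a, b)` of the rectangle is
`(x - a) * (y - b)`, whose factors have the same sign at the lower left and the upper right corner.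
The binary rearrangement inequality is this sign condition multiplied out.
-/

section McCormick

variable {R : Type*} [Ring R]

theorem mccormick_lower_corner_le_mul [PartialOrder R] [IsOrderedRing R] {xl x yl y : R}
    (hx : xl ≤ x) (hy : yl ≤ y) : xl * y + x * yl - xl * yl ≤ x * y :=
  sub_le_iff_le_add'.2 (mul_add_mul_le_mul_add_mul hx hy)

theorem mccormick_upper_corner_le_mul [PartialOrder R] [IsOrderedRing R] {x xu y yu : R}
    (hx : x ≤ xu) (hy : y ≤ yu) : xu * y + x * yu - xu * yu ≤ x * y :=
  sub_le_iff_le_add'.2 (mul_add_mul_le_mul_add_mul' hx hy)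

theorem mccormick_max_le_general [Lattice R] [IsOrderedRing R] {xl x xu yl y yu : R}
    (hx1 : xl ≤ x) (hx2 : x ≤ xu) (hy1 : yl ≤ y) (hy2 : y ≤ yu) :
    (xl * y + x * yl - xl * yl) ⊔ (xu * y + x * yu - xu * yu) ≤ x * y :=
  sup_le (mccormick_lower_corner_le_mul hx1 hy1) (mccormick_upper_corner_le_mul hx2 hy2)

end McCormick

/-- McCormick underestimators: both linear underestimators are lower bounds
for the bilinear monomial `x*y` on the rectangle. -/
theorem mccormick_max_le (xl x xu yl y yu : ℝ)
    (hx1 : xl ≤ x) (hx2 : x ≤ xu) (hy1 : yl ≤ y) (hy2 : y ≤ yu) :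
    max (xl * y + x * yl - xl * yl) (xu * y + x * yu - xu * yu) ≤ x * y :=
  mccormick_max_le_general hx1 hx2 hy1 hy2
end

section
/- Let x̲ < x̄ and y̲ < ȳ be real numbers, and define g(x, y) = max{x̲·y + x·y̲ − x̲·y̲, x̄·y + x·ȳ − x̄·ȳ}. Then g is the convex envelope of the bilinear monomial f(x, y) = x·y on the rectangle [x̲, x̄] × [y̲, ȳ]: (i) g is convex on the rectangle, (ii) g(x, y) ≤ x·y for all (x, y) in the rectangle, and (iii) for every function h : ℝ² → ℝ that is convex on the rectangle and satisfies h(x, y) ≤ x·y for all (x, y) in the rectangle, one has h(x, y) ≤ g(x, y) for all (x, y) in the rectangle. -/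
/-!
The tangent plane `T` of `(x, y) ↦ x * y` at a point `(a, b)` satisfies
`x * y - T (x, y) = (x - a) * (y - b)`. Hence the tangent planes at the lower left and the upper
right corner of the rectangle lie below `x * y` on the whole rectangle, and each of them agrees with
`x * y` at its own corner and at the two adjacent ones. The antidiagonal cuts the rectangle into the
two triangles spanned by these triples of corners, and a convex function lying below an affine one
at the vertices of a triangle lies below it on the whole triangle.
-/

open Set AffineMap

section ConvexEnvelope

/-- `g` is the convex envelope of `f` on `s`: the pointwise largest function convex on `s` and
bounded above by `f` there. Only the values on `s` matter, so `g` is determined on `s` only. -/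
structure IsConvexEnvelope (𝕜 : Type*) {E β : Type*} [Semiring 𝕜] [PartialOrder 𝕜]
    [AddCommMonoid E] [AddCommMonoid β] [PartialOrder β] [SMul 𝕜 E] [SMul 𝕜 β]
    (s : Set E) (f g : E → β) : Prop where
  convexOn : ConvexOn 𝕜 s g
  le : ∀ x ∈ s, g x ≤ f x
  greatest : ∀ h : E → β, ConvexOn 𝕜 s h → (∀ x ∈ s, h x ≤ f x) → ∀ x ∈ s, h x ≤ g x

variable {𝕜 E β : Type*} [Field 𝕜] [LinearOrder 𝕜] [IsStrictOrderedRing 𝕜]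
  [AddCommGroup E] [Module 𝕜 E] [AddCommGroup β] [LinearOrder β] [IsOrderedAddMonoid β]
  [Module 𝕜 β] [IsStrictOrderedModule 𝕜 β]

theorem le_of_mem_convexHull_of_convexOn_of_concaveOn {s t : Set E} {f g : E → β} {x : E}
    (hf : ConvexOn 𝕜 s f) (hg : ConcaveOn 𝕜 s g) (hts : t ⊆ s) (hfg : ∀ y ∈ t, f y ≤ g y)
    (hx : x ∈ convexHull 𝕜 t) : f x ≤ g x := by
  obtain ⟨y, hy, hxy⟩ := (hf.sub hg).exists_ge_of_mem_convexHull hts hx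
  exact sub_nonpos.1 (hxy.trans (sub_nonpos.2 (hfg y hy)))

end ConvexEnvelope

section CornerVertices

/-- In the rectangle with opposite corners `p` and `q`, the corner `p` and the two corners
adjacent to it. The opposite half of the rectangle is obtained by exchanging `p` and `q`. -/
def cornerVertices {α β : Type*} (p q : α × β) : Set (α × β) :=
  {p, (q.1, p.2), (p.1, q.2)}

theorem cornerVertices_subset_prod {α β : Type*} {s : Set α} {t : Set β} {p q : α × β}
    (hp : p ∈ s ×ˢ t) (hq : q ∈ s ×ˢ t) : cornerVertices p q ⊆ s ×ˢ t := by
  rintro z (rfl | rfl | rfl)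
  exacts [hp, ⟨hq.1, hp.2⟩, ⟨hp.1, hq.2⟩]

variable {𝕜 E F : Type*} [Field 𝕜] [LinearOrder 𝕜] [IsStrictOrderedRing 𝕜]
  [AddCommGroup E] [Module 𝕜 E] [AddCommGroup F] [Module 𝕜 F]

theorem lineMap_prodMk_mem_convexHull_cornerVertices (p q : E × F) {a b : 𝕜}
    (ha : 0 ≤ a) (hb : 0 ≤ b) (hab : a + b ≤ 1) :
    (lineMap p.1 q.1 a, lineMap p.2 q.2 b) ∈ convexHull 𝕜 (cornerVertices p q) := by
  refine mem_convexHull_of_exists_fintype ![1 - a - b, a, b] ![p, (q.1, p.2), (p.1, q.2)]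
    ?_ ?_ ?_ ?_
  · simp [Fin.forall_fin_succ, ha, hb, le_sub_iff_add_le, add_comm b, hab]
  · simp only [Fin.sum_univ_three, Matrix.cons_val]
    ring
  · simp [Fin.forall_fin_succ, cornerVertices]
  · ext <;> simp only [Fin.sum_univ_three, Matrix.cons_val, Prod.fst_add, Prod.snd_add,
      Prod.smul_fst, Prod.smul_snd, lineMap_apply_module] <;> module

theorem segment_prod_segment_subset_convexHull_cornerVertices_union (p q : E × F) :
    segment 𝕜 p.1 q.1 ×ˢ segment 𝕜 p.2 q.2 ⊆
      convexHull 𝕜 (cornerVertices p q) ∪ convexHull 𝕜 (cornerVertices q p) := by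
  simp only [segment_eq_image_lineMap]
  rintro ⟨_, _⟩ ⟨⟨a, ⟨ha₀, ha₁⟩, rfl⟩, ⟨b, ⟨hb₀, hb₁⟩, rfl⟩⟩
  rcases le_total (a + b) 1 with hab | hab
  · exact .inl (lineMap_prodMk_mem_convexHull_cornerVertices p q ha₀ hb₀ hab)
  · refine .inr ?_
    rw [← lineMap_apply_one_sub q.1, ← lineMap_apply_one_sub q.2]
    exact lineMap_prodMk_mem_convexHull_cornerVertices q p (by linarith) (by linarith)
      (by linarith)

end CornerVertices

section MulTangent

/-- The tangent plane at `p` of the multiplication `z ↦ z.1 * z.2`; at a corner of a rectangle it is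
the corresponding McCormick estimator. -/
def mulTangent {R : Type*} [CommRing R] (p z : R × R) : R :=
  p.1 * z.2 + z.1 * p.2 - p.1 * p.2

section CommRing

variable {R : Type*} [CommRing R]

theorem mul_sub_mulTangent (p z : R × R) :
    z.1 * z.2 - mulTangent p z = (z.1 - p.1) * (z.2 - p.2) := by
  unfold mulTangent
  ring

theorem mulTangent_eq_mul_of_mem_cornerVertices {p q z : R × R} (hz : z ∈ cornerVertices p q) :
    mulTangent p z = z.1 * z.2 := by
  refine (sub_eq_zero.1 ((mul_sub_mulTangent p z).trans ?_)).symm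
  rcases hz with rfl | rfl | rfl <;> simp

theorem mulTangent_convexCombination (p z w : R × R) {a b : R} (hab : a + b = 1) :
    mulTangent p (a • z + b • w) = a • mulTangent p z + b • mulTangent p w := by
  obtain rfl : b = 1 - a := eq_sub_of_add_eq' hab
  simp only [mulTangent, Prod.fst_add, Prod.snd_add, Prod.smul_fst, Prod.smul_snd, smul_eq_mul]
  ring

variable [PartialOrder R] {s : Set (R × R)}

theorem convexOn_mulTangent (hs : Convex R s) (p : R × R) : ConvexOn R s (mulTangent p) :=
  ⟨hs, fun z _ w _ _ _ _ _ hab ↦ (mulTangent_convexCombination p z w hab).le⟩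

theorem concaveOn_mulTangent (hs : Convex R s) (p : R × R) : ConcaveOn R s (mulTangent p) :=
  ⟨hs, fun z _ w _ _ _ _ _ hab ↦ (mulTangent_convexCombination p z w hab).ge⟩

theorem mulTangent_le_mul_iff [IsOrderedAddMonoid R] {p z : R × R} :
    mulTangent p z ≤ z.1 * z.2 ↔ 0 ≤ (z.1 - p.1) * (z.2 - p.2) := by
  rw [← mul_sub_mulTangent, sub_nonneg]

end CommRing

variable {𝕜 : Type*} [Field 𝕜] [LinearOrder 𝕜] [IsStrictOrderedRing 𝕜]

theorem le_mulTangent_of_mem_convexHull_cornerVertices {s : Set (𝕜 × 𝕜)} {h : 𝕜 × 𝕜 → 𝕜}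
    {p q z : 𝕜 × 𝕜} (hh : ConvexOn 𝕜 s h) (hle : ∀ w ∈ s, h w ≤ w.1 * w.2)
    (hpq : cornerVertices p q ⊆ s) (hz : z ∈ convexHull 𝕜 (cornerVertices p q)) :
    h z ≤ mulTangent p z :=
  le_of_mem_convexHull_of_convexOn_of_concaveOn hh (concaveOn_mulTangent hh.1 p) hpq
    (fun w hw ↦ (hle w (hpq hw)).trans_eq (mulTangent_eq_mul_of_mem_cornerVertices hw).symm) hz

end MulTangent

theorem mccormick_convex_envelope_general {𝕜 : Type*} [Field 𝕜] [LinearOrder 𝕜]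
    [IsStrictOrderedRing 𝕜] (xl xu yl yu : 𝕜) :
    IsConvexEnvelope 𝕜 (Icc xl xu ×ˢ Icc yl yu) (fun z ↦ z.1 * z.2)
      (fun z ↦ max (mulTangent (xl, yl) z) (mulTangent (xu, yu) z)) where
  convexOn :=
    have hS := (convex_Icc xl xu).prod (convex_Icc yl yu)
    (convexOn_mulTangent hS _).sup (convexOn_mulTangent hS _)
  le := fun _ ⟨hx, hy⟩ ↦ max_le
    (mulTangent_le_mul_iff.2 (mul_nonneg (sub_nonneg.2 hx.1) (sub_nonneg.2 hy.1)))
    (mulTangent_le_mul_iff.2 (mul_nonneg_of_nonpos_of_nonpos (sub_nonpos.2 hx.2)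
      (sub_nonpos.2 hy.2)))
  greatest := by
    rintro h hh hle z ⟨hx, hy⟩
    have hlower : (xl, yl) ∈ Icc xl xu ×ˢ Icc yl yu :=
      ⟨left_mem_Icc.2 (hx.1.trans hx.2), left_mem_Icc.2 (hy.1.trans hy.2)⟩
    have hupper : (xu, yu) ∈ Icc xl xu ×ˢ Icc yl yu :=
      ⟨right_mem_Icc.2 (hx.1.trans hx.2), right_mem_Icc.2 (hy.1.trans hy.2)⟩
    rcases segment_prod_segment_subset_convexHull_cornerVertices_union (xl, yl) (xu, yu)
      ⟨Icc_subset_segment hx, Icc_subset_segment hy⟩ with hz | hz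
    · exact le_max_of_le_left (le_mulTangent_of_mem_convexHull_cornerVertices hh hle
        (cornerVertices_subset_prod hlower hupper) hz)
    · exact le_max_of_le_right (le_mulTangent_of_mem_convexHull_cornerVertices hh hle
        (cornerVertices_subset_prod hupper hlower) hz)

/-- The maximum of the two McCormick underestimators is the convex envelope of
the bilinear monomial `x*y` on the rectangle `[xl, xu] × [yl, yu]`. -/
theorem mccormick_convex_envelope (xl xu yl yu : ℝ)
    (hx : xl < xu) (hy : yl < yu) :
    let S : Set (ℝ × ℝ) := (Set.Icc xl xu) ×ˢ (Set.Icc yl yu)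
    let g : ℝ × ℝ → ℝ := fun p =>
      max (xl * p.2 + p.1 * yl - xl * yl) (xu * p.2 + p.1 * yu - xu * yu)
    ConvexOn ℝ S g ∧
    (∀ p ∈ S, g p ≤ p.1 * p.2) ∧
    (∀ h : ℝ × ℝ → ℝ, ConvexOn ℝ S h → (∀ p ∈ S, h p ≤ p.1 * p.2) →
      ∀ p ∈ S, h p ≤ g p) :=
  have henv := mccormick_convex_envelope_general xl xu yl yu
  ⟨henv.convexOn, henv.le, henv.greatest⟩
end

section
/- Let x̲ ≤ x ≤ x̄ and y̲ ≤ y ≤ ȳ be real numbers. Then the approximation gap of the averaged McCormick lower bound satisfies 0 ≤ x·y − ½·((x̲·y + x·y̲ − x̲·y̲) + (x̄·y + x·ȳ − x̄·ȳ)) ≤ (x̄ − x̲)·(ȳ − y̲). In particular, the gap tends to zero as the width x̄ − x̲ of the x-interval tends to zero, uniformly over y ∈ [y̲, ȳ], so branching on the single variable x suffices for convergence of the lower bound. -/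
/-! The lines through `(x, y)` parallel to the axes cut the box `[xl, xu] × [yl, yu]` into four
rectangles. The gap is half the total area of the lower left and the upper right one, hence at most
half the area of the box. -/

/-- The averaged McCormick lower bound `(xy)_l` of the monomial `x * y` on the box
`[xl, xu] × [yl, yu]`: the mean of its linearizations at the corners `(xl, yl)` and `(xu, yu)`. -/
def averagedMcCormick {K : Type*} [Field K] (xl x xu yl y yu : K) : K :=
  (1 / 2) * ((xl * y + x * yl - xl * yl) + (xu * y + x * yu - xu * yu))

theorem mul_sub_averagedMcCormick {K : Type*} [Field K] [NeZero (2 : K)] (xl x xu yl y yu : K) :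
    x * y - averagedMcCormick xl x xu yl y yu =
      ((x - xl) * (y - yl) + (xu - x) * (yu - y)) / 2 := by
  unfold averagedMcCormick
  field_simp
  ring

theorem sub_mul_sub_add_sub_mul_sub_le {R : Type*} [Ring R] [PartialOrder R] [IsOrderedRing R]
    {xl x xu yl y yu : R} (hxl : xl ≤ x) (hxu : x ≤ xu) (hyl : yl ≤ y) (hyu : y ≤ yu) :
    (x - xl) * (y - yl) + (xu - x) * (yu - y) ≤ (xu - xl) * (yu - yl) := by
  have upper_left : 0 ≤ (x - xl) * (yu - y) :=
    mul_nonneg (sub_nonneg.2 hxl) (sub_nonneg.2 hyu)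
  have lower_right : 0 ≤ (xu - x) * (y - yl) :=
    mul_nonneg (sub_nonneg.2 hxu) (sub_nonneg.2 hyl)
  calc (x - xl) * (y - yl) + (xu - x) * (yu - y)
      ≤ (x - xl) * (y - yl) + (xu - x) * (yu - y)
          + ((x - xl) * (yu - y) + (xu - x) * (y - yl)) :=
        le_add_of_nonneg_right (add_nonneg upper_left lower_right)
    _ = (xu - xl) * (yu - yl) := by noncomm_ring

theorem averaged_mccormick_gap_bounds_general {K : Type*} [Field K] [LinearOrder K]
    [IsStrictOrderedRing K] {xl x xu yl y yu : K}
    (hxl : xl ≤ x) (hxu : x ≤ xu) (hyl : yl ≤ y) (hyu : y ≤ yu) :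
    0 ≤ x * y - averagedMcCormick xl x xu yl y yu ∧
    x * y - averagedMcCormick xl x xu yl y yu ≤ (xu - xl) * (yu - yl) / 2 := by
  rw [mul_sub_averagedMcCormick]
  constructor
  · have lower_left : 0 ≤ (x - xl) * (y - yl) :=
      mul_nonneg (sub_nonneg.2 hxl) (sub_nonneg.2 hyl)
    have upper_right : 0 ≤ (xu - x) * (yu - y) :=
      mul_nonneg (sub_nonneg.2 hxu) (sub_nonneg.2 hyu)
    exact div_nonneg (add_nonneg lower_left upper_right) zero_le_two
  · gcongr
    exact sub_mul_sub_add_sub_mul_sub_le hxl hxu hyl hyu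

/-- The approximation gap of the averaged McCormick lower bound is nonnegative
and bounded by the product of the interval widths; hence branching on the
single variable `x` suffices for convergence of the lower bound. -/
theorem averaged_mccormick_gap_bounds (xl x xu yl y yu : ℝ)
    (hx1 : xl ≤ x) (hx2 : x ≤ xu) (hy1 : yl ≤ y) (hy2 : y ≤ yu) :
    0 ≤ x * y - (1 / 2) * ((xl * y + x * yl - xl * yl) + (xu * y + x * yu - xu * yu)) ∧
    x * y - (1 / 2) * ((xl * y + x * yl - xl * yl) + (xu * y + x * yu - xu * yu))
      ≤ (xu - xl) * (yu - yl) :=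
  (averaged_mccormick_gap_bounds_general hx1 hx2 hy1 hy2).imp_right fun h ↦ h.trans <|
    half_le_self (mul_nonneg (sub_nonneg.2 (hx1.trans hx2)) (sub_nonneg.2 (hy1.trans hy2)))
end
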